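/- Let G be a finite simple graph and k a natural number. Suppose H is an induced subgraph of G obtained from G by a finite sequence of single-vertex deletions in which each deleted vertex has degree strictly less than k in the graph current at the time of its deletion, and suppose every vertex of H has degree at least k in H. Then the vertex set of H is exactly the k-core of G. In particular, the result of iteratively peeling vertices of degree less than k does not depend on the order of deletions. -/

import Mathlib

open scoped Classical

/-- The number of neighbors of `v` (in `G`) that lie in the vertex set `S`. -/
noncomputable def degIn {V : Type*} (G : SimpleGraph V) (S : Finset V) (v : V) : ℕ :=
  (S.filter (fun w => G.Adj v w)).card

/-- `S` is a set of vertices in which every vertex has at least `k` neighbors inside `S`. -/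
def IsCoreSet {V : Type*} (G : SimpleGraph V) (k : ℕ) (S : Finset V) : Prop :=
  ∀ v ∈ S, k ≤ degIn G S v

/-- The `k`-core of `G`: the union of all vertex sets in which every vertex has at least
`k` neighbors inside the set. -/
noncomputable def kCore {V : Type*} [Fintype V] (G : SimpleGraph V) (k : ℕ) : Finset V :=
  (Finset.univ.powerset.filter (IsCoreSet G k)).sup id

/-- The core value of a vertex `v`: the largest `k` such that `v` belongs to the `k`-core. -/
noncomputable def coreValue {V : Type*} [Fintype V] (G : SimpleGraph V) (v : V) : ℕ :=
  sSup {k : ℕ | v ∈ kCore G k}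

/-- `PeelsTo G k S T` holds if the vertex set `T` can be obtained from the vertex set `S`
(viewed as induced subgraphs of `G`) by a finite sequence of single-vertex deletions in which
each deleted vertex has degree strictly less than `k` in the induced subgraph current at the
time of its deletion. -/
inductive PeelsTo {V : Type*} [DecidableEq V] (G : SimpleGraph V) (k : ℕ) :
    Finset V → Finset V → Prop
  | refl (S : Finset V) : PeelsTo G k S S
  | step {S T : Finset V} (v : V) (hv : v ∈ S) (hdeg : degIn G S v < k)
      (h : PeelsTo G k (S.erase v) T) : PeelsTo G k S T

/-!
A set in which every vertex has at least `k` neighbors never loses a vertex to peeling: as long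
as it lies in the current vertex set, each of its vertices has current degree at least `k`. So it
survives to the end, and a terminal set of minimum degree at least `k` is the largest such set.
-/

section

variable {V : Type*} {G : SimpleGraph V} {k : ℕ}

theorem degIn_mono (v : V) : Monotone fun S : Finset V => degIn G S v :=
  fun _ _ hST => Finset.card_le_card (Finset.filter_subset_filter _ hST)

theorem IsCoreSet.notMem_of_degIn_lt {S C : Finset V} {v : V} (hC : IsCoreSet G k C)
    (hCS : C ⊆ S) (hdeg : degIn G S v < k) : v ∉ C :=
  fun hvC => hdeg.not_ge ((hC v hvC).trans (degIn_mono v hCS))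

theorem IsCoreSet.sup {ι : Type*} {s : Finset ι} {f : ι → Finset V}
    (hf : ∀ i ∈ s, IsCoreSet G k (f i)) : IsCoreSet G k (s.sup f) := by
  intro v hv
  obtain ⟨i, hi, hvi⟩ := Finset.mem_sup.1 hv
  exact (hf i hi v hvi).trans (degIn_mono v (Finset.le_sup hi))

theorem isGreatest_kCore [Fintype V] : IsGreatest {C | IsCoreSet G k C} (kCore G k) :=
  ⟨IsCoreSet.sup fun _ hC => (Finset.mem_filter.1 hC).2,
    fun _ hC => Finset.le_sup (f := id) (by simpa using hC)⟩

theorem PeelsTo.subset [DecidableEq V] {S T : Finset V} (h : PeelsTo G k S T) : T ⊆ S := by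
  induction h with
  | refl S => exact Finset.Subset.refl S
  | step v _ _ _ ih => exact ih.trans (Finset.erase_subset v _)

theorem PeelsTo.subset_of_isCoreSet [DecidableEq V] {S T C : Finset V} (h : PeelsTo G k S T)
    (hC : IsCoreSet G k C) (hCS : C ⊆ S) : C ⊆ T := by
  induction h with
  | refl => exact hCS
  | step v _ hdeg _ ih =>
    exact ih (Finset.subset_erase.2 ⟨hCS, hC.notMem_of_degIn_lt hCS hdeg⟩)

end

theorem peeling_gives_kCore_general {V : Type*} [DecidableEq V] {G : SimpleGraph V} {k : ℕ}
    {S A : Finset V} (hpeel : PeelsTo G k S A) (hA : IsCoreSet G k A) :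
    IsGreatest {C | C ⊆ S ∧ IsCoreSet G k C} A :=
  ⟨⟨hpeel.subset, hA⟩, fun _ hC => hpeel.subset_of_isCoreSet hC.2 hC.1⟩

theorem peeling_gives_kCore {V : Type*} [Fintype V] [DecidableEq V]
    (G : SimpleGraph V) (k : ℕ) (A : Finset V)
    (hpeel : PeelsTo G k Finset.univ A) (hdeg : ∀ v ∈ A, k ≤ degIn G A v) :
    A = kCore G k := by
  have hgreatest : IsGreatest {C | IsCoreSet G k C} A := by
    simpa using peeling_gives_kCore_general hpeel hdeg
  exact hgreatest.unique isGreatest_kCore
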